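/- Let R be a Noetherian local domain, v a divisorial valuation of the quotient field K of R dominating R (so trdeg of the residue field of v over R/m_R equals dim R − 1), and w the Gauss valuation on K(z) extending v by w(Σ a_i z^i) = min(v(a_i) + i). Then w is a divisorial valuation of the polynomial ring A = R[z] with center at the maximal ideal m = m_R A + zA; that is, trdeg_{A/m}(K(z)w) = ht(m) − 1 = dim A − 1. -/

import Mathlib

open IsLocalRing Polynomial

/-!
Let `γ = w X`, suppose `γ ^ e = v a` with `e ≠ 0`, and let `t` be the residue of the unit
`X ^ e / a`. The terms of a polynomial in `X ^ e / a` over `O_v` are monomials of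
distinct degrees, with the same values as its coefficients, so `w` sees no cancellation and `t` is
transcendental over `Kv`. Conversely, dividing numerator and denominator by a dominant monomial of
the denominator writes every residue of `w` through residues of quotients of monomials, and the
`e`-th power of such a residue is an element of `Kv` times an integral power of `t`. Hence
`trdeg (K(X)w / Kv) = 1`, and transcendence degrees add up along `R/m_R ⊆ Kv ⊆ K(X)w`.
-/

theorem exists_isTranscendenceBasis_ncard_eq_iff {A B : Type*} [CommRing A] [CommRing B]
    [IsDomain B] [Algebra A B] [FaithfulSMul A B] {n : ℕ} :
    (∃ s : Set B, IsTranscendenceBasis A (Subtype.val : s → B) ∧ s.Finite ∧ s.ncard = n) ↔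
      Algebra.trdeg A B = n := by
  have := (algebraMap A B).domain_nontrivial
  constructor
  · rintro ⟨s, hs, hfin, rfl⟩
    rw [← hs.cardinalMk_eq_trdeg, Set.cast_ncard hfin]
  · intro h
    obtain ⟨s, hs⟩ := exists_isTranscendenceBasis A B
    have hcard : Cardinal.mk s = n := hs.cardinalMk_eq_trdeg.trans h
    have hfin : s.Finite := Cardinal.lt_aleph0_iff_set_finite.1 (hcard ▸ Cardinal.natCast_lt_aleph0)
    exact ⟨s, hs, hfin, by exact_mod_cast (Set.cast_ncard hfin).trans hcard⟩

theorem trdeg_eq_one_of_transcendental {F L : Type*} [Field F] [Field L] [Algebra F L] {t : L}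
    (ht : Transcendental F t) [Algebra.IsAlgebraic (IntermediateField.adjoin F {t}) L] :
    Algebra.trdeg F L = 1 := by
  have : Algebra.IsAlgebraic (Algebra.adjoin F {t}) L :=
    IntermediateField.isAlgebraic_adjoin_iff_top.1 ‹_›
  have : Algebra.Transcendental F L := ⟨t, ht⟩
  apply le_antisymm
  · simpa using Algebra.IsAlgebraic.trdeg_le_cardinalMk F ({t} : Set L)
  · exact Cardinal.one_le_iff_pos.2 (trdeg_pos F L)

theorem mem_map_C_add_span_X_iff {A : Type*} [CommRing A] {I : Ideal A} {p : A[X]} :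
    p ∈ I.map C + Ideal.span {X} ↔ p.coeff 0 ∈ I := by
  suffices I.map C ⊔ Ideal.span {X} = I.comap constantCoeff by
    rw [Submodule.add_eq_sup, this]
    rfl
  apply le_antisymm
  · refine sup_le (Ideal.map_le_iff_le_comap.2 fun r hr => ?_) ?_
    · simpa [Ideal.mem_comap] using hr
    · simp [Ideal.mem_comap]
  · intro q hq
    rw [← divX_mul_X_add q, sup_comm]
    exact Submodule.add_mem_sup (Ideal.mul_mem_left _ _ (Ideal.mem_span_singleton_self _))
      (Ideal.mem_map_of_mem _ hq)

theorem residue_valuationSubring_eq_zero_iff {L Γ₀ : Type*} [Field L]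
    [LinearOrderedCommGroupWithZero Γ₀] {w : Valuation L Γ₀} {x : w.valuationSubring} :
    residue _ x = 0 ↔ w (x : L) < 1 := by
  rw [residue_eq_zero_iff, mem_maximalIdeal, mem_nonunits_iff,
    (Valuation.valuationSubring.integers w).isUnit_iff_valuation_eq_one]
  exact (show w (x : L) ≤ 1 from x.2).lt_iff_ne.symm

theorem isScalarTower_residueField_valuationSubring {A K L Γ Δ : Type*} [CommRing A]
    [IsLocalRing A] [Field K] [Field L] [Algebra A K] [Algebra K L]
    [LinearOrderedCommGroupWithZero Γ] [LinearOrderedCommGroupWithZero Δ]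
    {v : Valuation K Γ} {w : Valuation L Δ} [v.HasExtension w]
    [Algebra (ResidueField A) (ResidueField v.valuationSubring)]
    [Algebra (ResidueField A) (ResidueField w.valuationSubring)]
    (hvA : ∀ r : A, v (algebraMap A K r) ≤ 1)
    (hv : ∀ (r : A) (a : v.valuationSubring), (a : K) = algebraMap A K r →
      algebraMap (ResidueField A) _ (residue A r) = residue _ a)
    (hw : ∀ (r : A) (a : w.valuationSubring), (a : L) = algebraMap K L (algebraMap A K r) →
      algebraMap (ResidueField A) _ (residue A r) = residue _ a) :
    IsScalarTower (ResidueField A) (ResidueField v.valuationSubring)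
      (ResidueField w.valuationSubring) := by
  refine .of_algebraMap_eq fun x => ?_
  obtain ⟨r, rfl⟩ := residue_surjective x
  let a : v.valuationSubring := ⟨algebraMap A K r, hvA r⟩
  rw [hv r a rfl, hw r (algebraMap v.valuationSubring w.valuationSubring a) rfl,
    Valuation.HasExtension.algebraMap_residue_eq_residue_algebraMap]

/-- `w` is the Gauss (monomial) extension of `v` to `K(X)` in which `X` has value `γ`. In
multiplicative notation, the minimum of the `v (aᵢ) + i * γ` becomes a supremum. -/
def IsGaussExtension {K Γ₀ : Type*} [Field K] [LinearOrderedCommGroupWithZero Γ₀]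
    (v : Valuation K Γ₀) (w : Valuation (RatFunc K) Γ₀) (γ : Γ₀) : Prop :=
  ∀ p : K[X], w (algebraMap K[X] (RatFunc K) p) = p.support.sup fun i => v (p.coeff i) * γ ^ i

namespace IsGaussExtension

variable {K Γ₀ : Type*} [Field K] [LinearOrderedCommGroupWithZero Γ₀]
  {v : Valuation K Γ₀} {w : Valuation (RatFunc K) Γ₀} {γ : Γ₀}

theorem valuation_monomial (hw : IsGaussExtension v w γ) (i : ℕ) (c : K) :
    w (algebraMap K[X] (RatFunc K) (monomial i c)) = v c * γ ^ i := by
  rcases eq_or_ne c 0 with rfl | hc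
  · simp
  · rw [hw, support_monomial i hc, Finset.sup_singleton, coeff_monomial_same]

theorem valuation_algebraMap (hw : IsGaussExtension v w γ) (c : K) :
    w (algebraMap K (RatFunc K) c) = v c := by
  simpa using hw.valuation_monomial 0 c

theorem valuation_X (hw : IsGaussExtension v w γ) : w RatFunc.X = γ := by
  simpa using hw.valuation_monomial 1 1

theorem hasExtension (hw : IsGaussExtension v w γ) : v.HasExtension w where
  val_isEquiv_comap x y := by
    simp only [Valuation.comap_apply, hw.valuation_algebraMap]

theorem valuation_monomial_le (hw : IsGaussExtension v w γ) (p : K[X]) (i : ℕ) :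
    v (p.coeff i) * γ ^ i ≤ w (algebraMap K[X] (RatFunc K) p) := by
  by_cases hi : i ∈ p.support
  · rw [hw]
    exact Finset.le_sup (f := fun i => v (p.coeff i) * γ ^ i) hi
  · simp [notMem_support_iff.1 hi]

theorem exists_valuation_eq_valuation_monomial (hw : IsGaussExtension v w γ) {p : K[X]}
    (hp : p ≠ 0) :
    ∃ i ∈ p.support, w (algebraMap K[X] (RatFunc K) p) = v (p.coeff i) * γ ^ i := by
  rw [hw]
  exact Finset.exists_mem_eq_sup p.support (support_nonempty.2 hp) _

theorem valuation_le_one (hw : IsGaussExtension v w γ) (hγ : γ ≤ 1) {p : K[X]}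
    (hp : ∀ i, v (p.coeff i) ≤ 1) : w (algebraMap K[X] (RatFunc K) p) ≤ 1 := by
  rw [hw]
  exact Finset.sup_le fun i _ => mul_le_one' (hp i) (pow_le_one' hγ i)

theorem valuation_lt_one_iff (hw : IsGaussExtension v w γ) (hγ : γ < 1) {p : K[X]}
    (hp : ∀ i, v (p.coeff i) ≤ 1) :
    w (algebraMap K[X] (RatFunc K) p) < 1 ↔ v (p.coeff 0) < 1 := by
  constructor
  · intro h
    simpa using (hw.valuation_monomial_le p 0).trans_lt h
  · intro h
    rw [hw, Finset.sup_lt_iff hγ.bot_lt]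
    intro i _
    rcases eq_or_ne i 0 with rfl | hi
    · simpa using h
    · exact (mul_le_of_le_one_left' (hp i)).trans_lt (pow_lt_one₀ zero_le hγ hi)

theorem mem_center_iff {A : Type*} [CommRing A] [IsLocalRing A] [Algebra A K]
    (hw : IsGaussExtension v w γ) (hγ : γ < 1) (hvA : ∀ r : A, v (algebraMap A K r) ≤ 1)
    (hvdom : ∀ r : A, v (algebraMap A K r) < 1 ↔ r ∈ maximalIdeal A) (p : A[X]) :
    w (algebraMap K[X] (RatFunc K) (p.map (algebraMap A K))) ≤ 1 ∧
      (w (algebraMap K[X] (RatFunc K) (p.map (algebraMap A K))) < 1 ↔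
        p ∈ (maximalIdeal A).map C + Ideal.span {X}) := by
  have hp (i : ℕ) : v ((p.map (algebraMap A K)).coeff i) ≤ 1 := by
    rw [coeff_map]
    exact hvA _
  refine ⟨hw.valuation_le_one hγ.le hp, ?_⟩
  rw [hw.valuation_lt_one_iff hγ hp, coeff_map, hvdom, mem_map_C_add_span_X_iff]

theorem residue_mem_of_polynomial_div_monomial (hw : IsGaussExtension v w γ)
    {S : Subfield (ResidueField w.valuationSubring)}
    (hS : ∀ (c : K) (i j : ℕ) (b : w.valuationSubring),
      (b : RatFunc K) = algebraMap K (RatFunc K) c * RatFunc.X ^ i / RatFunc.X ^ j →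
        residue _ b ∈ S)
    {p : K[X]} {c : K} {j : ℕ} {b : w.valuationSubring}
    (hb : (b : RatFunc K) =
      algebraMap K[X] (RatFunc K) p * (algebraMap K (RatFunc K) c / RatFunc.X ^ j)) :
    residue _ b ∈ S := by
  have hterm (i : ℕ) : w (algebraMap K[X] (RatFunc K) (monomial i (p.coeff i)) *
      (algebraMap K (RatFunc K) c / RatFunc.X ^ j)) ≤ 1 := by
    rw [map_mul, hw.valuation_monomial]
    calc v (p.coeff i) * γ ^ i * w (algebraMap K (RatFunc K) c / RatFunc.X ^ j)
        ≤ w (algebraMap K[X] (RatFunc K) p) * w (algebraMap K (RatFunc K) c / RatFunc.X ^ j) :=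
          mul_le_mul_left (hw.valuation_monomial_le p i) _
      _ = w (b : RatFunc K) := by rw [hb, map_mul]
      _ ≤ 1 := b.2
  let term (i : ℕ) : w.valuationSubring := ⟨_, hterm i⟩
  have hsum : b = ∑ i ∈ p.support, term i := by
    apply Subtype.ext
    rw [hb, AddSubmonoidClass.coe_finsetSum, ← Finset.sum_mul, ← map_sum, ← p.as_sum_support]
  rw [hsum, map_sum]
  refine S.sum_mem fun i _ => hS (p.coeff i * c) i j (term i) ?_
  simp only [term, RatFunc.algebraMap_monomial, RatFunc.algebraMap_eq_C, map_mul]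
  ring

theorem subfield_eq_top_of_monomial_residue_mem (hw : IsGaussExtension v w γ)
    {S : Subfield (ResidueField w.valuationSubring)}
    (hS : ∀ (c : K) (i j : ℕ) (b : w.valuationSubring),
      (b : RatFunc K) = algebraMap K (RatFunc K) c * RatFunc.X ^ i / RatFunc.X ^ j →
        residue _ b ∈ S) :
    S = ⊤ := by
  refine eq_top_iff.2 fun x _ => ?_
  obtain ⟨f, rfl⟩ := residue_surjective x
  obtain ⟨p, q, hq, hpq⟩ := IsFractionRing.div_surjective (A := K[X]) (f : RatFunc K)
  have hq0 : q ≠ 0 := nonZeroDivisors.ne_zero hq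
  obtain ⟨j, -, hmax⟩ := hw.exists_valuation_eq_valuation_monomial hq0
  set μ : RatFunc K := algebraMap K (RatFunc K) (q.coeff j)⁻¹ / RatFunc.X ^ j with hμ
  have hqL : algebraMap K[X] (RatFunc K) q ≠ 0 := by simpa using hq0
  have hqμ : w (algebraMap K[X] (RatFunc K) q * μ) = 1 := by
    rw [map_mul, hμ, map_div₀, map_pow, hw.valuation_algebraMap, hw.valuation_X, map_inv₀,
      inv_div_left, mul_comm (γ ^ j), ← hmax, mul_inv_cancel₀ ((Valuation.ne_zero_iff w).2 hqL)]
  have hfqp : (f : RatFunc K) * (algebraMap K[X] (RatFunc K) q * μ) =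
      algebraMap K[X] (RatFunc K) p * μ := by
    rw [← hpq]
    field_simp
  have hpμ : w (algebraMap K[X] (RatFunc K) p * μ) ≤ 1 := by
    rw [← hfqp, map_mul, hqμ, mul_one]
    exact f.2
  let num : w.valuationSubring := ⟨_, hpμ⟩
  let den : w.valuationSubring := ⟨_, hqμ.le⟩
  have hden : residue _ den ≠ 0 := fun h =>
    (residue_valuationSubring_eq_zero_iff.1 h).ne hqμ
  have hres : residue _ f * residue _ den = residue _ num := by
    rw [← map_mul]
    exact congrArg _ (Subtype.ext hfqp)
  rw [eq_div_of_mul_eq hden hres]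
  exact S.div_mem (hw.residue_mem_of_polynomial_div_monomial hS rfl)
    (hw.residue_mem_of_polynomial_div_monomial hS rfl)

section Residue

variable {a : K} {e : ℕ}

theorem valuation_X_pow_div (hw : IsGaussExtension v w γ) (hγ : γ ≠ 0) (ha : v a = γ ^ e) :
    w (RatFunc.X ^ e / algebraMap K (RatFunc K) a) = 1 := by
  rw [map_div₀, map_pow, hw.valuation_X, hw.valuation_algebraMap, ha, div_self (pow_ne_zero e hγ)]

theorem valuation_coeff_le_valuation_aeval (hw : IsGaussExtension v w γ) (hγ : γ ≠ 0) (he : e ≠ 0)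
    (ha : v a = γ ^ e) (p : K[X]) (i : ℕ) :
    v (p.coeff i) ≤ w (aeval (RatFunc.X ^ e / algebraMap K (RatFunc K) a) p) := by
  let q : K[X] := expand K e (p.comp (C a⁻¹ * X))
  have hq : aeval (RatFunc.X ^ e / algebraMap K (RatFunc K) a) p =
      algebraMap K[X] (RatFunc K) q := by
    rw [← RatFunc.aeval_X_left_eq_algebraMap, expand_aeval, aeval_comp]
    simp only [map_mul, aeval_C, aeval_X, map_inv₀, div_eq_inv_mul]
  have hcoeff : q.coeff (i * e) = p.coeff i * a⁻¹ ^ i := by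
    rw [coeff_expand_mul (Nat.pos_of_ne_zero he), comp_C_mul_X_coeff]
  calc v (p.coeff i) = v (q.coeff (i * e)) * γ ^ (i * e) := by
        rw [hcoeff, map_mul, map_pow, map_inv₀, ha, mul_assoc, mul_comm i e, pow_mul, ← mul_pow,
          inv_mul_cancel₀ (pow_ne_zero e hγ), one_pow, mul_one]
    _ ≤ w (aeval (RatFunc.X ^ e / algebraMap K (RatFunc K) a) p) :=
        (hw.valuation_monomial_le q (i * e)).trans_eq (by rw [hq])

variable [v.HasExtension w] {T : w.valuationSubring}

theorem transcendental_residue (hw : IsGaussExtension v w γ) (hγ : γ ≠ 0) (he : e ≠ 0)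
    (ha : v a = γ ^ e) (hT : (T : RatFunc K) = RatFunc.X ^ e / algebraMap K (RatFunc K) a) :
    Transcendental (ResidueField v.valuationSubring) (residue _ T) := by
  rw [transcendental_iff]
  intro P hP
  obtain ⟨Q, rfl⟩ := map_surjective _ residue_surjective P
  have hres : residue _ (aeval T Q) = aeval (residue _ T) (Q.map (residue _)) :=
    map_aeval_eq_aeval_map (φ := residue v.valuationSubring)
      (ψ := residue w.valuationSubring) rfl Q T
  have : IsScalarTower v.valuationSubring w.valuationSubring (RatFunc K) :=
    .of_algebraMap_eq fun _ => rfl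
  have hcoe : ((aeval T Q : w.valuationSubring) : RatFunc K) =
      aeval (RatFunc.X ^ e / algebraMap K (RatFunc K) a)
        (Q.map (algebraMap v.valuationSubring K)) := by
    rw [← hT, aeval_map_algebraMap]
    exact (aeval_algebraMap_apply (RatFunc K) T Q).symm
  have hlt : w (aeval T Q : w.valuationSubring) < 1 :=
    residue_valuationSubring_eq_zero_iff.1 (hres.trans hP)
  ext i
  rw [coeff_map, coeff_zero, residue_valuationSubring_eq_zero_iff]
  have hle := hw.valuation_coeff_le_valuation_aeval hγ he ha
    (Q.map (algebraMap v.valuationSubring K)) i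
  rw [coeff_map, ← hcoe] at hle
  exact hle.trans_lt hlt

theorem isAlgebraic_residue_monomial (hw : IsGaussExtension v w γ) (hγ : γ ≠ 0) (he : e ≠ 0)
    (ha : v a = γ ^ e) (hT : (T : RatFunc K) = RatFunc.X ^ e / algebraMap K (RatFunc K) a)
    {c : K} {i j : ℕ} {b : w.valuationSubring}
    (hb : (b : RatFunc K) = algebraMap K (RatFunc K) c * RatFunc.X ^ i / RatFunc.X ^ j) :
    IsAlgebraic (IntermediateField.adjoin (ResidueField v.valuationSubring) {residue _ T})
      (residue _ b) := by
  have hwT : w (T : RatFunc K) = 1 := hT ▸ hw.valuation_X_pow_div hγ ha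
  have ha0 : algebraMap K (RatFunc K) a ≠ 0 := by
    simpa using (Valuation.ne_zero_iff v).1 (ha ▸ pow_ne_zero e hγ)
  have hX : (RatFunc.X : RatFunc K) ≠ 0 := RatFunc.X_ne_zero
  have hrel : (b : RatFunc K) ^ e * (T : RatFunc K) ^ j =
      algebraMap K (RatFunc K) (c ^ e * a ^ i / a ^ j) * (T : RatFunc K) ^ i := by
    rw [hb, hT]
    simp only [map_div₀, map_mul, map_pow, div_pow, mul_pow, ← pow_mul, mul_comm _ e]
    field_simp
  have hx : v (c ^ e * a ^ i / a ^ j) ≤ 1 := by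
    rw [← hw.valuation_algebraMap]
    calc w (algebraMap K (RatFunc K) (c ^ e * a ^ i / a ^ j))
        = w ((b : RatFunc K) ^ e) := by simpa [hwT] using (congrArg w hrel).symm
      _ ≤ 1 := by simpa using pow_le_one' b.2 e
  let x : v.valuationSubring := ⟨_, hx⟩
  have hres : residue _ b ^ e * residue _ T ^ j =
      algebraMap (ResidueField v.valuationSubring) _ (residue _ x) * residue _ T ^ i := by
    rw [Valuation.HasExtension.algebraMap_residue_eq_residue_algebraMap]
    simp only [← map_pow, ← map_mul]
    exact congrArg _ (Subtype.ext hrel)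
  have hT0 : residue _ T ≠ 0 := fun h => (residue_valuationSubring_eq_zero_iff.1 h).ne hwT
  have hTmem := IntermediateField.mem_adjoin_simple_self
    (ResidueField v.valuationSubring) (residue _ T)
  have hmem : residue _ b ^ e ∈
      IntermediateField.adjoin (ResidueField v.valuationSubring) {residue _ T} := by
    rw [eq_div_of_mul_eq (pow_ne_zero j hT0) hres]
    exact div_mem (mul_mem (IntermediateField.algebraMap_mem _ _) (pow_mem hTmem i))
      (pow_mem hTmem j)
  exact .of_pow (Nat.pos_of_ne_zero he)
    (isAlgebraic_algebraMap (⟨_, hmem⟩ : IntermediateField.adjoin _ {residue _ T}))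

theorem isAlgebraic_adjoin_residue (hw : IsGaussExtension v w γ) (hγ : γ ≠ 0) (he : e ≠ 0)
    (ha : v a = γ ^ e) (hT : (T : RatFunc K) = RatFunc.X ^ e / algebraMap K (RatFunc K) a) :
    Algebra.IsAlgebraic
      (IntermediateField.adjoin (ResidueField v.valuationSubring) {residue _ T})
      (ResidueField w.valuationSubring) := by
  let F := IntermediateField.adjoin (ResidueField v.valuationSubring) {residue _ T}
  have htop : (algebraicClosure F (ResidueField w.valuationSubring)).toSubfield = ⊤ :=
    hw.subfield_eq_top_of_monomial_residue_mem fun _ _ _ _ hb =>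
      mem_algebraicClosure_iff.2 (hw.isAlgebraic_residue_monomial hγ he ha hT hb)
  exact ⟨fun x => mem_algebraicClosure_iff.1 (show x ∈ (algebraicClosure F _).toSubfield from
    htop ▸ Subfield.mem_top x)⟩

end Residue

theorem trdeg_residueField [v.HasExtension w] (hw : IsGaussExtension v w γ) (hγ : γ ≠ 0)
    (htors : ∃ e ≠ 0, ∃ a, v a = γ ^ e) :
    Algebra.trdeg (ResidueField v.valuationSubring) (ResidueField w.valuationSubring) = 1 := by
  obtain ⟨e, he, a, ha⟩ := htors
  let T : w.valuationSubring :=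
    ⟨RatFunc.X ^ e / algebraMap K (RatFunc K) a, (hw.valuation_X_pow_div hγ ha).le⟩
  have := hw.isAlgebraic_adjoin_residue (T := T) hγ he ha rfl
  exact trdeg_eq_one_of_transcendental (hw.transcendental_residue (T := T) hγ he ha rfl)

end IsGaussExtension

theorem exists_eq_exp_neg_one_pow {x : WithZero (Multiplicative ℤ)} (hx0 : x ≠ 0) (hx1 : x < 1) :
    ∃ e ≠ 0, x = WithZero.exp (-1 : ℤ) ^ e := by
  lift x to ℤ using hx0 with n
  rw [← WithZero.exp_zero, WithZero.exp_lt_exp] at hx1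
  refine ⟨n.natAbs, by lia, ?_⟩
  rw [← WithZero.exp_nsmul, WithZero.exp_inj, nsmul_eq_mul]
  lia

theorem exists_mem_maximalIdeal_ne_zero {A : Type*} [CommRing A] [IsLocalRing A]
    (h : ringKrullDim A ≠ 0) : ∃ r ∈ maximalIdeal A, r ≠ 0 := by
  contrapose! h
  exact ringKrullDim_eq_zero_of_isField
    (isField_iff_maximalIdeal_eq.2 ((Submodule.eq_bot_iff _).2 h))

theorem stmt_3_general {R K Γ₀ : Type*} [CommRing R] [IsNoetherianRing R] [IsLocalRing R]
    [Field K] [Algebra R K] [LinearOrderedCommGroupWithZero Γ₀] {v : Valuation K Γ₀}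
    {w : Valuation (RatFunc K) Γ₀} {γ : Γ₀}
    [Algebra (ResidueField R) (ResidueField v.valuationSubring)]
    [Algebra (ResidueField R) (ResidueField w.valuationSubring)]
    (hvR : ∀ r : R, v (algebraMap R K r) ≤ 1)
    (hvdom : ∀ r : R, v (algebraMap R K r) < 1 ↔ r ∈ maximalIdeal R)
    (hφ : ∀ (r : R) (a : v.valuationSubring), (a : K) = algebraMap R K r →
      algebraMap (ResidueField R) _ (residue R r) = residue _ a)
    (hw : IsGaussExtension v w γ) (hγ0 : γ ≠ 0) (hγ1 : γ < 1)
    (htors : ∃ e ≠ 0, ∃ a, v a = γ ^ e)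
    (hχ : ∀ (r : R) (a : w.valuationSubring),
      (a : RatFunc K) = algebraMap K (RatFunc K) (algebraMap R K r) →
        algebraMap (ResidueField R) _ (residue R r) = residue _ a) :
    (∀ p : R[X], w (algebraMap K[X] (RatFunc K) (p.map (algebraMap R K))) ≤ 1 ∧
      (w (algebraMap K[X] (RatFunc K) (p.map (algebraMap R K))) < 1 ↔
        p ∈ (maximalIdeal R).map C + Ideal.span {X})) ∧
    ringKrullDim R[X] = ringKrullDim R + 1 ∧
    Algebra.trdeg (ResidueField R) (ResidueField w.valuationSubring) =
      Algebra.trdeg (ResidueField R) (ResidueField v.valuationSubring) + 1 := by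
  have := hw.hasExtension
  have := isScalarTower_residueField_valuationSubring hvR hφ hχ
  refine ⟨hw.mem_center_iff hγ1 hvR hvdom, ringKrullDim_of_isNoetherianRing, ?_⟩
  rw [← trdeg_add_eq (ResidueField R) (ResidueField v.valuationSubring),
    hw.trdeg_residueField hγ0 htors]

/-- Let `R` be a Noetherian local domain of Krull dimension `d` with quotient
field `K`, `v` a divisorial valuation of `K` dominating `R` (so the residue field of `v` has
transcendence degree `d − 1 = dim R − 1` over `R/m_R`), and `w` the Gauss valuation on `K(z)`
extending `v` by `w(Σ aᵢ zⁱ) = min (v(aᵢ) + i)`.  Then `w` is a divisorial valuation of the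
polynomial ring `A = R[z]` with center the maximal ideal `m = m_R A + z A`: the center of `w`
on `A` is `m`, and `trdeg_{A/m}(K(z)w) = ht(m) − 1 = dim A − 1 = d`
(note `A/m = R/m_R`). -/
theorem stmt_3 (R : Type*) [CommRing R] [IsDomain R] [IsNoetherianRing R] [IsLocalRing R]
    (K : Type*) [Field K] [Algebra R K] [IsFractionRing R K]
    (d : ℕ) (hd : ringKrullDim R = d) (hd1 : 1 ≤ d)
    (v : Valuation K (WithZero (Multiplicative ℤ)))
    -- `v` dominates `R`:
    (hvR : ∀ r : R, v (algebraMap R K r) ≤ 1)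
    (hvdom : ∀ r : R, v (algebraMap R K r) < 1 ↔ r ∈ maximalIdeal R)
    -- the inclusion of residue fields `R/m_R → Kv`:
    (φ : ResidueField R →+* ResidueField v.valuationSubring)
    (hφ : ∀ (r : R) (a : v.valuationSubring),
      (a : K) = algebraMap R K r → φ (residue R r) = residue _ a)
    -- `v` is divisorial: `trdeg_{R/m_R}(Kv) = ht(m_R) − 1 = d − 1`:
    (hdivisorial : ∃ s : Set (ResidueField v.valuationSubring),
      @IsTranscendenceBasis s (ResidueField R) (ResidueField v.valuationSubring)
        _ _ φ.toAlgebra Subtype.val ∧ s.Finite ∧ s.ncard = d - 1)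
    -- `w` is the Gauss valuation on `K(z)` extending `v`:
    (w : Valuation (RatFunc K) (WithZero (Multiplicative ℤ)))
    (hgauss : ∀ p : Polynomial K,
      w (algebraMap (Polynomial K) (RatFunc K) p) =
        p.support.sup fun i =>
          v (p.coeff i) * (Multiplicative.ofAdd (-1 : ℤ) : Multiplicative ℤ) ^ i)
    -- the inclusion of residue fields `A/m = R/m_R → K(z)w`:
    (χ : ResidueField R →+* ResidueField w.valuationSubring)
    (hχ : ∀ (r : R) (a : w.valuationSubring),
      (a : RatFunc K) = algebraMap K (RatFunc K) (algebraMap R K r) →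
        χ (residue R r) = residue _ a) :
    -- the center of `w` on `A = R[z]` is the maximal ideal `m = m_R A + z A`:
    (∀ p : Polynomial R,
      w (algebraMap (Polynomial K) (RatFunc K) (p.map (algebraMap R K))) ≤ 1 ∧
      (w (algebraMap (Polynomial K) (RatFunc K) (p.map (algebraMap R K))) < 1 ↔
        p ∈ Ideal.map (C : R →+* Polynomial R) (maximalIdeal R) +
              Ideal.span {(X : Polynomial R)})) ∧
    -- `ht(m) − 1 = dim A − 1 = d`:
    ringKrullDim (Polynomial R) = ((d + 1 : ℕ) : WithBot ℕ∞) ∧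
    -- `trdeg_{A/m}(K(z)w) = d`, i.e. `w` is divisorial for `A`:
    (∃ s : Set (ResidueField w.valuationSubring),
      @IsTranscendenceBasis s (ResidueField R) (ResidueField w.valuationSubring)
        _ _ χ.toAlgebra Subtype.val ∧ s.Finite ∧ s.ncard = d) := by
  let := φ.toAlgebra
  let := χ.toAlgebra
  have hdim : ringKrullDim R ≠ 0 := by
    rw [hd]
    exact_mod_cast Nat.one_le_iff_ne_zero.1 hd1
  obtain ⟨r, hr, hr0⟩ := exists_mem_maximalIdeal_ne_zero hdim
  obtain ⟨e, he, hre⟩ := exists_eq_exp_neg_one_pow (by simpa using hr0) ((hvdom r).2 hr)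
  obtain ⟨hcenter, hdimA, htrdeg⟩ := stmt_3_general hvR hvdom hφ (γ := WithZero.exp (-1)) hgauss
    WithZero.exp_ne_zero (by decide) ⟨e, he, _, hre⟩ hχ
  refine ⟨hcenter, by rw [hdimA, hd]; rfl, exists_isTranscendenceBasis_ncard_eq_iff.2 ?_⟩
  rw [htrdeg, exists_isTranscendenceBasis_ncard_eq_iff.1 hdivisorial]
  exact_mod_cast Nat.sub_add_cancel hd1
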